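/- arXiv:2010.09785 — 8 statements merged into one kernel-verified Lean document; each statement's English description precedes it below -/
import Mathlib

section
/- Let P and L be skew-symmetric 3×3 real matrices. Then P·L·P = (1/2)·tr(L·P)·P. -/
open Matrix

/-!
Over a ring in which `2` is invertible, a skew-symmetric `3 × 3` matrix is the matrix `[v]` of
`w ↦ v ⨯₃ w` for some vector `v`. The expansion of the vector triple product reads
`[u] [v] = v uᵀ - (u ⬝ᵥ v) I`. Hence `tr ([u] [v]) = -2 (u ⬝ᵥ v)`, and since `[v] v = 0`,
multiplying by `[v]` on the left gives `[v] [u] [v] = -(u ⬝ᵥ v) [v]`.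
-/

theorem diag_eq_zero_of_transpose_eq_neg {n R : Type*} [NonAssocRing R]
    (h2 : IsLeftRegular (2 : R)) {A : Matrix n n R} (hA : Aᵀ = -A) : A.diag = 0 := by
  funext i
  have self_eq_neg : A i i = -A i i := congrFun₂ hA i i
  apply h2
  change 2 * A i i = 2 * 0
  rw [mul_zero, two_mul, ← eq_neg_iff_add_eq_zero]
  exact self_eq_neg

section CrossMatrix

variable {R : Type*} [CommRing R]

/-- The cross-product matrix of `v`, often written `[v]` or `v̂`: the matrix of `w ↦ v ⨯₃ w` in the
standard basis. It turns products of skew-symmetric matrices into iterated cross products. -/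
def crossMatrix (v : Fin 3 → R) : Matrix (Fin 3) (Fin 3) R :=
  LinearMap.toMatrix' (crossProduct v)

theorem crossMatrix_mulVec (v w : Fin 3 → R) : crossMatrix v *ᵥ w = v ⨯₃ w :=
  LinearMap.toMatrix'_mulVec _ _

theorem crossMatrix_eq_of (v : Fin 3 → R) :
    crossMatrix v = !![0, -v 2, v 1; v 2, 0, -v 0; -v 1, v 0, 0] := by
  ext i j
  fin_cases i <;> fin_cases j <;> simp [crossMatrix, LinearMap.toMatrix'_apply, cross_apply]

theorem exists_crossMatrix_eq_of_transpose_eq_neg {A : Matrix (Fin 3) (Fin 3) R}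
    (hA : Aᵀ = -A) (hdiag : A.diag = 0) : ∃ v, crossMatrix v = A := by
  have skew (i j : Fin 3) : A j i = -A i j := congrFun₂ hA i j
  have diag_zero (i : Fin 3) : A i i = 0 := congrFun hdiag i
  refine ⟨![A 2 1, A 0 2, A 1 0], ?_⟩
  rw [crossMatrix_eq_of, eta_fin_three A]
  simp [diag_zero, skew 1 0, skew 0 2, skew 2 1]

theorem crossMatrix_mul_crossMatrix (u v : Fin 3 → R) :
    crossMatrix u * crossMatrix v = vecMulVec v u - (u ⬝ᵥ v) • 1 := by
  apply mulVec_injective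
  funext w
  calc (crossMatrix u * crossMatrix v) *ᵥ w = u ⨯₃ (v ⨯₃ w) := by
        simp only [← mulVec_mulVec, crossMatrix_mulVec]
    _ = (u ⬝ᵥ w) • v - (v ⬝ᵥ u) • w := cross_cross_eq_smul_sub_smul' u v w
    _ = (vecMulVec v u - (u ⬝ᵥ v) • 1) *ᵥ w := by
        rw [sub_mulVec, vecMulVec_mulVec, op_smul_eq_smul, smul_mulVec, one_mulVec,
          dotProduct_comm v u]

theorem trace_crossMatrix_mul_crossMatrix (u v : Fin 3 → R) :
    (crossMatrix u * crossMatrix v).trace = -2 * (u ⬝ᵥ v) := by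
  rw [crossMatrix_mul_crossMatrix, trace_sub, trace_vecMulVec, trace_smul, trace_one,
    dotProduct_comm v u, Fintype.card_fin, smul_eq_mul]
  push_cast
  ring

theorem crossMatrix_mul_crossMatrix_mul_crossMatrix_self (u v : Fin 3 → R) :
    crossMatrix v * crossMatrix u * crossMatrix v = -(u ⬝ᵥ v) • crossMatrix v := by
  rw [Matrix.mul_assoc, crossMatrix_mul_crossMatrix u v, Matrix.mul_sub, mul_vecMulVec,
    crossMatrix_mulVec, cross_self, zero_vecMulVec, zero_sub, Matrix.mul_smul, Matrix.mul_one,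
    neg_smul]

end CrossMatrix

theorem stmt_0_general {R : Type*} [CommRing R] [Invertible (2 : R)]
    {P L : Matrix (Fin 3) (Fin 3) R} (hP : Pᵀ = -P) (hL : Lᵀ = -L) :
    P * L * P = (⅟2 * (L * P).trace) • P := by
  have h2 : IsLeftRegular (2 : R) := (isUnit_of_invertible 2).isRegular.left
  obtain ⟨p, rfl⟩ :=
    exists_crossMatrix_eq_of_transpose_eq_neg hP (diag_eq_zero_of_transpose_eq_neg h2 hP)
  obtain ⟨l, rfl⟩ :=
    exists_crossMatrix_eq_of_transpose_eq_neg hL (diag_eq_zero_of_transpose_eq_neg h2 hL)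
  rw [crossMatrix_mul_crossMatrix_mul_crossMatrix_self, trace_crossMatrix_mul_crossMatrix,
    neg_mul, mul_neg, invOf_mul_cancel_left]

theorem stmt_0 (P L : Matrix (Fin 3) (Fin 3) ℝ)
    (hP : Pᵀ = -P) (hL : Lᵀ = -L) :
    P * L * P = ((1 / 2) * (L * P).trace) • P := by
  let _ : Invertible (2 : ℝ) := invertibleOfNonzero two_ne_zero
  rw [stmt_0_general hP hL, invOf_eq_inv, one_div]
end

section
/- Let U ⊆ ℝ³ be open and let P be a smooth map from U to skew-symmetric 3×3 real matrices whose induced Poisson-type bracket satisfies the Jacobi identity on U. Then for every smooth function h : U → ℝ, the induced Poisson-type bracket of the rescaled matrix field x ↦ h(x)·P(x) also satisfies the Jacobi identity on U. (In particular, on a 3-dimensional space, the gauge transformation (1/F)·Π of a Poisson bivector field Π is again Poisson on the set where F ≠ 0.) -/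
open Matrix

/-- The Poisson-type bracket induced by a matrix field `P` on `ℝ^m`:
`{f,g}(x) = ∑ i j, P(x)_{ij} ∂f/∂xᵢ(x) ∂g/∂xⱼ(x)`. -/
noncomputable def pbracket {m : ℕ} (P : (Fin m → ℝ) → Matrix (Fin m) (Fin m) ℝ)
    (f g : (Fin m → ℝ) → ℝ) (x : Fin m → ℝ) : ℝ :=
  ∑ i, ∑ j, P x i j * fderiv ℝ f x (Pi.single i 1) * fderiv ℝ g x (Pi.single j 1)

/-- The bracket induced by `P` satisfies the Jacobi identity on `U`. -/
def JacobiOn {m : ℕ} (P : (Fin m → ℝ) → Matrix (Fin m) (Fin m) ℝ)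
    (U : Set (Fin m → ℝ)) : Prop :=
  ∀ f g h : (Fin m → ℝ) → ℝ,
    ContDiffOn ℝ (⊤ : ℕ∞) f U → ContDiffOn ℝ (⊤ : ℕ∞) g U → ContDiffOn ℝ (⊤ : ℕ∞) h U →
    ∀ x ∈ U,
      pbracket P f (pbracket P g h) x + pbracket P g (pbracket P h f) x +
        pbracket P h (pbracket P f g) x = 0

/-!
The Leibniz rule gives, for the cyclic sum `J` of double brackets measuring the failure of the
Jacobi identity,
`J_{hP}(f, g, k) = h² J_P(f, g, k) + h ({f, g}{k, h} + {g, k}{f, h} + {k, f}{g, h})`.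
The last factor is half of `P ∧ P` evaluated on `df, dg, dk, dh`. It vanishes when the
bivector `P` is pointwise decomposable, which is automatic in dimension three, where every
alternating 4-form is zero.
-/

section Decomposable

variable {R n : Type*} [CommRing R] [Fintype n]

/-- The Plücker relation `A ∧ A = 0` for a bivector given by its matrix `A`; over `ℝ` it says that
`A` has the form `u ∧ v`. It is stated for all covectors rather than for matrix entries, so that it
applies directly to differentials. -/
def IsDecomposableBivector (A : Matrix n n R) : Prop :=
  ∀ a b c d : n → R,
    (a ⬝ᵥ A *ᵥ b) * (c ⬝ᵥ A *ᵥ d) + (b ⬝ᵥ A *ᵥ c) * (a ⬝ᵥ A *ᵥ d) +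
      (c ⬝ᵥ A *ᵥ a) * (b ⬝ᵥ A *ᵥ d) = 0

theorem isDecomposableBivector_fin_three_of_transpose_eq_neg [IsAddTorsionFree R]
    {A : Matrix (Fin 3) (Fin 3) R} (hA : Aᵀ = -A) : IsDecomposableBivector A := by
  have skew : ∀ i j, A j i = -A i j := fun i j => congrFun₂ hA i j
  have diag : ∀ i, A i i = 0 := fun i => self_eq_neg.mp (skew i i)
  intro a b c d
  simp only [dotProduct, mulVec, Fin.sum_univ_three, diag, skew 0 1, skew 0 2, skew 1 2]
  ring

end Decomposable

section Bracket

variable {m : ℕ} {P : (Fin m → ℝ) → Matrix (Fin m) (Fin m) ℝ} {f g h k : (Fin m → ℝ) → ℝ}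
  {x : Fin m → ℝ}

/-- The differential of `f` at `x` as the covector of its partial derivatives `∂f/∂xᵢ(x)`. -/
noncomputable def partialDerivs (f : (Fin m → ℝ) → ℝ) (x : Fin m → ℝ) : Fin m → ℝ :=
  fun i => fderiv ℝ f x (Pi.single i 1)

theorem partialDerivs_mul (hf : DifferentiableAt ℝ f x) (hg : DifferentiableAt ℝ g x) :
    partialDerivs (f * g) x = f x • partialDerivs g x + g x • partialDerivs f x := by
  ext i
  simp [partialDerivs, fderiv_mul hf hg]

theorem differentiableAt_partialDerivs (hf : ContDiffAt ℝ 2 f x) :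
    DifferentiableAt ℝ (partialDerivs f) x := by
  have hf' : DifferentiableAt ℝ (fderiv ℝ f) x :=
    (hf.fderiv_right (m := 1) (by norm_num)).differentiableAt one_ne_zero
  exact differentiableAt_pi.mpr fun i => hf'.clm_apply (differentiableAt_const _)

theorem pbracket_eq_dotProduct_mulVec (P : (Fin m → ℝ) → Matrix (Fin m) (Fin m) ℝ)
    (f g : (Fin m → ℝ) → ℝ) (x : Fin m → ℝ) :
    pbracket P f g x = partialDerivs f x ⬝ᵥ P x *ᵥ partialDerivs g x := by
  simp only [pbracket, partialDerivs, dotProduct, mulVec, Finset.mul_sum]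
  exact Finset.sum_congr rfl fun i _ => Finset.sum_congr rfl fun j _ => by ring

theorem pbracket_smul (h : (Fin m → ℝ) → ℝ) (P : (Fin m → ℝ) → Matrix (Fin m) (Fin m) ℝ)
    (f g : (Fin m → ℝ) → ℝ) :
    pbracket (fun x => h x • P x) f g = h * pbracket P f g := by
  ext x
  simp only [pbracket_eq_dotProduct_mulVec, Pi.mul_apply, smul_mulVec, dotProduct_smul,
    smul_eq_mul]

theorem pbracket_mul_right (P : (Fin m → ℝ) → Matrix (Fin m) (Fin m) ℝ)
    (f : (Fin m → ℝ) → ℝ) (hg : DifferentiableAt ℝ g x) (hk : DifferentiableAt ℝ k x) :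
    pbracket P f (g * k) x = g x * pbracket P f k x + k x * pbracket P f g x := by
  simp only [pbracket_eq_dotProduct_mulVec, partialDerivs_mul hg hk, mulVec_add, mulVec_smul,
    dotProduct_add, dotProduct_smul, smul_eq_mul]

theorem differentiableAt_pbracket (hP : ∀ i j, DifferentiableAt ℝ (fun y => P y i j) x)
    (hf : ContDiffAt ℝ 2 f x) (hg : ContDiffAt ℝ 2 g x) :
    DifferentiableAt ℝ (pbracket P f g) x := by
  have hf' := differentiableAt_pi.mp (differentiableAt_partialDerivs hf)
  have hg' := differentiableAt_pi.mp (differentiableAt_partialDerivs hg)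
  exact .fun_sum fun i _ => .fun_sum fun j _ => ((hP i j).mul (hf' i)).mul (hg' j)

/-- The Jacobiator of the bracket of `P`: the cyclic sum of double brackets whose vanishing is the
Jacobi identity for `f`, `g`, `k` at `x`. -/
noncomputable def jacobiator (P : (Fin m → ℝ) → Matrix (Fin m) (Fin m) ℝ)
    (f g k : (Fin m → ℝ) → ℝ) (x : Fin m → ℝ) : ℝ :=
  pbracket P f (pbracket P g k) x + pbracket P g (pbracket P k f) x +
    pbracket P k (pbracket P f g) x

theorem jacobiator_smul (hP : ∀ i j, DifferentiableAt ℝ (fun y => P y i j) x)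
    (hh : DifferentiableAt ℝ h x) (hf : ContDiffAt ℝ 2 f x) (hg : ContDiffAt ℝ 2 g x)
    (hk : ContDiffAt ℝ 2 k x) :
    jacobiator (fun y => h y • P y) f g k x =
      h x ^ 2 * jacobiator P f g k x +
        h x * (pbracket P f g x * pbracket P k h x + pbracket P g k x * pbracket P f h x +
          pbracket P k f x * pbracket P g h x) := by
  simp only [jacobiator, pbracket_smul, Pi.mul_apply,
    pbracket_mul_right P _ hh (differentiableAt_pbracket hP hg hk),
    pbracket_mul_right P _ hh (differentiableAt_pbracket hP hk hf),
    pbracket_mul_right P _ hh (differentiableAt_pbracket hP hf hg)]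
  ring

theorem IsDecomposableBivector.cyclic_sum_pbracket_mul_pbracket (hP : IsDecomposableBivector (P x))
    (f g k h : (Fin m → ℝ) → ℝ) :
    pbracket P f g x * pbracket P k h x + pbracket P g k x * pbracket P f h x +
      pbracket P k f x * pbracket P g h x = 0 := by
  simpa only [pbracket_eq_dotProduct_mulVec] using hP _ _ _ _

end Bracket

theorem stmt_4_general {m : ℕ} {U : Set (Fin m → ℝ)} (hU : IsOpen U)
    {P : (Fin m → ℝ) → Matrix (Fin m) (Fin m) ℝ}
    (hPdiff : ∀ i j, DifferentiableOn ℝ (fun x => P x i j) U)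
    (hPdec : ∀ x ∈ U, IsDecomposableBivector (P x))
    (hPJacobi : JacobiOn P U) {h : (Fin m → ℝ) → ℝ} (hh : DifferentiableOn ℝ h U) :
    JacobiOn (fun x => h x • P x) U := by
  intro f g k hf hg hk x hx
  have hxU : U ∈ nhds x := hU.mem_nhds hx
  have contDiffAt_two {φ : (Fin m → ℝ) → ℝ} (hφ : ContDiffOn ℝ (⊤ : ℕ∞) φ U) :
      ContDiffAt ℝ 2 φ x := (hφ.contDiffAt hxU).of_le (WithTop.coe_le_coe.mpr le_top)
  have jacobi : jacobiator P f g k x = 0 := hPJacobi f g k hf hg hk x hx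
  change jacobiator (fun y => h y • P y) f g k x = 0
  rw [jacobiator_smul (fun i j => (hPdiff i j).differentiableAt hxU) (hh.differentiableAt hxU)
      (contDiffAt_two hf) (contDiffAt_two hg) (contDiffAt_two hk), jacobi,
    (hPdec x hx).cyclic_sum_pbracket_mul_pbracket, mul_zero, mul_zero, add_zero]

theorem stmt_4 (U : Set (Fin 3 → ℝ)) (hU : IsOpen U)
    (P : (Fin 3 → ℝ) → Matrix (Fin 3) (Fin 3) ℝ)
    (hPsmooth : ∀ i j, ContDiffOn ℝ (⊤ : ℕ∞) (fun x => P x i j) U)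
    (hPskew : ∀ x ∈ U, (P x)ᵀ = -P x)
    (hPJacobi : JacobiOn P U)
    (h : (Fin 3 → ℝ) → ℝ) (hh : ContDiffOn ℝ (⊤ : ℕ∞) h U) :
    JacobiOn (fun x => h x • P x) U :=
  stmt_4_general hU (fun i j => (hPsmooth i j).differentiableOn (by simp))
    (fun x hx => isDecomposableBivector_fin_three_of_transpose_eq_neg (hPskew x hx)) hPJacobi
    (hh.differentiableOn (by simp))
end

section
/- The bivector field on ℝ⁶ given by the skew-symmetric matrix field P(x) with nonzero upper-triangular entries P(x)_{14} = 1, P(x)_{25} = 1, P(x)_{36} = 1, P(x)_{56} = x₂² (and P(x)_{ji} = −P(x)_{ij}, all other entries zero) induces a Poisson-type bracket that satisfies the Jacobi identity on ℝ⁶. -/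
open Matrix

/-- The coefficient matrix of the bivector field
`Π = ∂₁∧∂₄ + ∂₂∧∂₅ + ∂₃∧∂₆ + x₂² ∂₅∧∂₆` on `ℝ⁶`. -/
def Pplasma (x : Fin 6 → ℝ) : Matrix (Fin 6) (Fin 6) ℝ :=
  !![0, 0, 0, 1, 0, 0;
     0, 0, 0, 0, 1, 0;
     0, 0, 0, 0, 0, 1;
     -1, 0, 0, 0, 0, 0;
     0, -1, 0, 0, 0, (x 1) ^ 2;
     0, 0, -1, 0, -(x 1) ^ 2, 0]

/-!
Write `X_f = P ∇f`. For skew `P`, differentiating `{g, h} = ∇g · P ∇h` along `X_f` gives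
`{f, {g, h}} = D²h(X_f, X_g) - D²g(X_f, X_h) - ∇g · (∂_{X_f} P) ∇h`. In the cyclic sum the Hessian
terms cancel by symmetry, and what is left is minus a trivector evaluated on the gradients, with
no derivative of order two. For the plasma bivector, `∂_v P = 2 x₂ v₂ ∂₅∧∂₆` and `(P a)₂ = a₅`, so
the trivector is proportional to the cyclic sum of `a₅ (b₅ c₆ - b₆ c₅)`: a determinant with two
equal rows.
-/

/-- The gradient `(∂₁f, …, ∂ₘf)` of `f` at `x`, taken in `Fin m → ℝ` rather than in
`EuclideanSpace ℝ (Fin m)` so that matrices act on it. -/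
noncomputable def coordGradient {m : ℕ} (f : (Fin m → ℝ) → ℝ) (x : Fin m → ℝ) : Fin m → ℝ :=
  fun i ↦ fderiv ℝ f x (Pi.single i 1)

/-- The Hamiltonian vector field of `g`, with the sign for which the derivative of `f` along it
is `{f, g}`. -/
noncomputable def hamiltonianVec {m : ℕ} (P : (Fin m → ℝ) → Matrix (Fin m) (Fin m) ℝ)
    (g : (Fin m → ℝ) → ℝ) (x : Fin m → ℝ) : Fin m → ℝ :=
  P x *ᵥ coordGradient g x

/-- The derivative at `x` of the matrix field `P` in the direction `v`, taken entrywise because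
matrices carry no canonical norm. -/
noncomputable def matrixDirDeriv {m : ℕ} (P : (Fin m → ℝ) → Matrix (Fin m) (Fin m) ℝ)
    (x v : Fin m → ℝ) : Matrix (Fin m) (Fin m) ℝ :=
  Matrix.of fun i j ↦ fderiv ℝ (fun y ↦ P y i j) x v

/-- The trivector obstructing the Jacobi identity (up to a constant, the Schouten bracket of `P`
with itself), evaluated at `x` on the covectors `a`, `b`, `c`. -/
noncomputable def jacobiTrivector {m : ℕ} (P : (Fin m → ℝ) → Matrix (Fin m) (Fin m) ℝ)
    (x a b c : Fin m → ℝ) : ℝ :=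
  b ⬝ᵥ matrixDirDeriv P x (P x *ᵥ a) *ᵥ c + c ⬝ᵥ matrixDirDeriv P x (P x *ᵥ b) *ᵥ a +
    a ⬝ᵥ matrixDirDeriv P x (P x *ᵥ c) *ᵥ b

lemma dotProduct_mulVec_swap_of_transpose_eq_neg {n R : Type*} [Fintype n] [CommRing R]
    {A : Matrix n n R} (hA : Aᵀ = -A) (v w : n → R) :
    v ⬝ᵥ A *ᵥ w = -(w ⬝ᵥ A *ᵥ v) := by
  rw [dotProduct_mulVec, ← mulVec_transpose, hA, neg_mulVec, neg_dotProduct, dotProduct_comm]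

lemma map_single_dotProduct {n R F : Type*} [Fintype n] [DecidableEq n] [CommSemiring R]
    [FunLike F (n → R) R] [LinearMapClass F R (n → R) R] (L : F) (v : n → R) :
    (fun i ↦ L (Pi.single i 1)) ⬝ᵥ v = L v := by
  conv_rhs => rw [pi_eq_sum_univ' v, map_sum]
  simp only [dotProduct, map_smul, smul_eq_mul, mul_comm]

section Bracket

variable {m : ℕ} {P : (Fin m → ℝ) → Matrix (Fin m) (Fin m) ℝ} {f g h : (Fin m → ℝ) → ℝ}
  {x : Fin m → ℝ}

lemma pbracket_eq_dotProduct (P : (Fin m → ℝ) → Matrix (Fin m) (Fin m) ℝ)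
    (f g : (Fin m → ℝ) → ℝ) (x : Fin m → ℝ) :
    pbracket P f g x = coordGradient f x ⬝ᵥ P x *ᵥ coordGradient g x := by
  simp only [pbracket, coordGradient, dotProduct, mulVec, Finset.mul_sum]
  exact Finset.sum_congr rfl fun i _ ↦ Finset.sum_congr rfl fun j _ ↦ by ring

lemma pbracket_eq_neg_fderiv_hamiltonianVec (hskew : (P x)ᵀ = -P x) (f g : (Fin m → ℝ) → ℝ) :
    pbracket P f g x = -fderiv ℝ g x (hamiltonianVec P f x) := by
  rw [pbracket_eq_dotProduct, dotProduct_mulVec_swap_of_transpose_eq_neg hskew]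
  exact congrArg Neg.neg (map_single_dotProduct (fderiv ℝ g x) _)

lemma hasFDerivAt_coordGradient_apply (hf : ContDiffAt ℝ 2 f x) (i : Fin m) :
    HasFDerivAt (fun y ↦ coordGradient f y i)
      ((fderiv ℝ (fderiv ℝ f) x).flip (Pi.single i 1)) x := by
  have hf' : DifferentiableAt ℝ (fderiv ℝ f) x :=
    (hf.fderiv_right (m := 1) (by norm_num)).differentiableAt (by norm_num)
  exact (ContinuousLinearMap.apply ℝ ℝ (Pi.single i 1)).hasFDerivAt.comp x hf'.hasFDerivAt

lemma fderiv_pbracket_apply (hP : ∀ i j, DifferentiableAt ℝ (fun y ↦ P y i j) x)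
    (hf : ContDiffAt ℝ 2 f x) (hg : ContDiffAt ℝ 2 g x) (v : Fin m → ℝ) :
    fderiv ℝ (pbracket P f g) x v =
      (fun i ↦ fderiv ℝ (fderiv ℝ f) x v (Pi.single i 1)) ⬝ᵥ P x *ᵥ coordGradient g x +
        coordGradient f x ⬝ᵥ P x *ᵥ (fun i ↦ fderiv ℝ (fderiv ℝ g) x v (Pi.single i 1)) +
        coordGradient f x ⬝ᵥ matrixDirDeriv P x v *ᵥ coordGradient g x := by
  have hasFDerivAt_sum := HasFDerivAt.fun_sum fun i (_ : i ∈ Finset.univ) ↦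
    HasFDerivAt.fun_sum fun j (_ : j ∈ Finset.univ) ↦
      ((hP i j).hasFDerivAt.fun_mul (hasFDerivAt_coordGradient_apply hf i)).fun_mul
        (hasFDerivAt_coordGradient_apply hg j)
  change fderiv ℝ (fun y ↦ ∑ i, ∑ j, P y i j * coordGradient f y i * coordGradient g y j) x v = _
  rw [hasFDerivAt_sum.fderiv]
  simp only [dotProduct, mulVec, matrixDirDeriv, of_apply, Finset.mul_sum,
    ← Finset.sum_add_distrib, _root_.sum_apply]
  refine Finset.sum_congr rfl fun i _ ↦ Finset.sum_congr rfl fun j _ ↦ ?_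
  simp only [_root_.add_apply, _root_.smul_apply, ContinuousLinearMap.flip_apply, smul_eq_mul]
  ring

lemma fderiv_pbracket_apply_of_transpose_eq_neg
    (hP : ∀ i j, DifferentiableAt ℝ (fun y ↦ P y i j) x) (hskew : (P x)ᵀ = -P x)
    (hf : ContDiffAt ℝ 2 f x) (hg : ContDiffAt ℝ 2 g x) (v : Fin m → ℝ) :
    fderiv ℝ (pbracket P f g) x v =
      fderiv ℝ (fderiv ℝ f) x v (hamiltonianVec P g x) -
        fderiv ℝ (fderiv ℝ g) x v (hamiltonianVec P f x) +
        coordGradient f x ⬝ᵥ matrixDirDeriv P x v *ᵥ coordGradient g x := by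
  rw [fderiv_pbracket_apply hP hf hg,
    dotProduct_mulVec_swap_of_transpose_eq_neg hskew (coordGradient f x),
    map_single_dotProduct, map_single_dotProduct, ← sub_eq_add_neg]
  rfl

theorem pbracket_cyclic_sum_eq_neg_jacobiTrivector
    (hP : ∀ i j, DifferentiableAt ℝ (fun y ↦ P y i j) x) (hskew : (P x)ᵀ = -P x)
    (hf : ContDiffAt ℝ 2 f x) (hg : ContDiffAt ℝ 2 g x) (hh : ContDiffAt ℝ 2 h x) :
    pbracket P f (pbracket P g h) x + pbracket P g (pbracket P h f) x +
        pbracket P h (pbracket P f g) x =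
      -jacobiTrivector P x (coordGradient f x) (coordGradient g x) (coordGradient h x) := by
  have hessian_symm {u : (Fin m → ℝ) → ℝ} (hu : ContDiffAt ℝ 2 u x) (v w : Fin m → ℝ) :
      fderiv ℝ (fderiv ℝ u) x v w = fderiv ℝ (fderiv ℝ u) x w v :=
    hu.isSymmSndFDerivAt (by simp) v w
  simp only [pbracket_eq_neg_fderiv_hamiltonianVec hskew _ (pbracket P _ _),
    fderiv_pbracket_apply_of_transpose_eq_neg hP hskew, hf, hg, hh]
  rw [hessian_symm hf (hamiltonianVec P h x), hessian_symm hg (hamiltonianVec P f x),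
    hessian_symm hh (hamiltonianVec P g x)]
  simp only [jacobiTrivector, hamiltonianVec]
  ring

end Bracket

/-- The constant bivector `∂₅∧∂₆`, along which `Pplasma` deforms the canonical structure. -/
def deformationBivector : Matrix (Fin 6) (Fin 6) ℝ :=
  Matrix.single 4 5 1 - Matrix.single 5 4 1

lemma Pplasma_transpose (x : Fin 6 → ℝ) : (Pplasma x)ᵀ = -Pplasma x := by
  ext i j
  fin_cases i <;> fin_cases j <;> simp [Pplasma]

lemma Pplasma_eq_add_smul (x : Fin 6 → ℝ) :
    Pplasma x = Pplasma 0 + x 1 ^ 2 • deformationBivector := by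
  ext i j
  fin_cases i <;> fin_cases j <;> simp [Pplasma, deformationBivector]

lemma hasFDerivAt_Pplasma_apply (x : Fin 6 → ℝ) (i j : Fin 6) :
    HasFDerivAt (fun y ↦ Pplasma y i j)
      ((2 * x 1 * deformationBivector i j) •
        ContinuousLinearMap.proj (R := ℝ) (φ := fun _ : Fin 6 ↦ ℝ) 1) x := by
  have hasFDerivAt_sq := (hasFDerivAt_apply (𝕜 := ℝ) (1 : Fin 6) x).pow 2
  rw [funext fun y ↦ congrFun₂ (Pplasma_eq_add_smul y) i j]
  simpa [smul_smul, mul_comm] using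
    (hasFDerivAt_sq.mul_const (deformationBivector i j)).const_add (Pplasma 0 i j)

lemma dotProduct_deformationBivector_mulVec (v w : Fin 6 → ℝ) :
    v ⬝ᵥ deformationBivector *ᵥ w = v 4 * w 5 - v 5 * w 4 := by
  simp [deformationBivector, sub_mulVec, single_mulVec_eq, mul_comm]

lemma matrixDirDeriv_Pplasma (x v : Fin 6 → ℝ) :
    matrixDirDeriv Pplasma x v = (2 * x 1 * v 1) • deformationBivector := by
  ext i j
  rw [matrixDirDeriv, of_apply, (hasFDerivAt_Pplasma_apply x i j).fderiv]
  simp only [_root_.smul_apply, ContinuousLinearMap.proj_apply, Matrix.smul_apply, smul_eq_mul]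
  ring

lemma Pplasma_mulVec_apply_one (x a : Fin 6 → ℝ) : (Pplasma x *ᵥ a) 1 = a 4 := by
  simp [Pplasma, mulVec, dotProduct, Fin.sum_univ_succ]

lemma jacobiTrivector_Pplasma (x a b c : Fin 6 → ℝ) : jacobiTrivector Pplasma x a b c = 0 := by
  have dirDeriv_pairing (u v w : Fin 6 → ℝ) :
      v ⬝ᵥ matrixDirDeriv Pplasma x (Pplasma x *ᵥ u) *ᵥ w =
        2 * x 1 * u 4 * (v 4 * w 5 - v 5 * w 4) := by
    rw [matrixDirDeriv_Pplasma, Pplasma_mulVec_apply_one, smul_mulVec, dotProduct_smul,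
      dotProduct_deformationBivector_mulVec, smul_eq_mul]
  simp only [jacobiTrivector, dirDeriv_pairing]
  ring

theorem stmt_7_general {f g h : (Fin 6 → ℝ) → ℝ} {x : Fin 6 → ℝ}
    (hf : ContDiffAt ℝ 2 f x) (hg : ContDiffAt ℝ 2 g x) (hh : ContDiffAt ℝ 2 h x) :
    pbracket Pplasma f (pbracket Pplasma g h) x + pbracket Pplasma g (pbracket Pplasma h f) x +
      pbracket Pplasma h (pbracket Pplasma f g) x = 0 := by
  rw [pbracket_cyclic_sum_eq_neg_jacobiTrivector
    (fun i j ↦ (hasFDerivAt_Pplasma_apply x i j).differentiableAt) (Pplasma_transpose x) hf hg hh,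
    jacobiTrivector_Pplasma, neg_zero]

theorem stmt_7 (f g h : (Fin 6 → ℝ) → ℝ)
    (hf : ContDiff ℝ (⊤ : ℕ∞) f) (hg : ContDiff ℝ (⊤ : ℕ∞) g) (hh : ContDiff ℝ (⊤ : ℕ∞) h) :
    ∀ x : Fin 6 → ℝ,
      pbracket Pplasma f (pbracket Pplasma g h) x +
        pbracket Pplasma g (pbracket Pplasma h f) x +
        pbracket Pplasma h (pbracket Pplasma f g) x = 0 := by
  have two_le : (2 : WithTop ℕ∞) ≤ (⊤ : ℕ∞) := by norm_cast
  exact fun x ↦ stmt_7_general (hf.contDiffAt.of_le two_le) (hg.contDiffAt.of_le two_le)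
    (hh.contDiffAt.of_le two_le)
end

section
/- The Poisson structure on ℝ⁴ given by the skew-symmetric matrix field P(x) with nonzero upper-triangular entries P(x)_{13} = 2x₄, P(x)_{14} = 2x₃, P(x)_{23} = −2x₄, P(x)_{24} = 2x₃, P(x)_{34} = x₁ − x₂ is unimodular with respect to the Euclidean volume form: for every smooth function h : ℝ⁴ → ℝ, the divergence of the vector field x ↦ P(x)·∇h(x) is identically zero on ℝ⁴. -/
open Matrix

/-- The gradient `(∂f/∂x₁, …, ∂f/∂x_m)` of a function on `ℝ^m`. -/
noncomputable def gradVec {m : ℕ} (f : (Fin m → ℝ) → ℝ) (x : Fin m → ℝ) :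
    Fin m → ℝ :=
  fun i => fderiv ℝ f x (Pi.single i 1)

/-- The divergence `∑ i, ∂Vⁱ/∂xᵢ` of a vector field on `ℝ^m`. -/
noncomputable def divg {m : ℕ} (V : (Fin m → ℝ) → Fin m → ℝ) (x : Fin m → ℝ) : ℝ :=
  ∑ i, fderiv ℝ (fun y => V y i) x (Pi.single i 1)

/-- The coefficient matrix of the Pais–Uhlenbeck bivector field
`Π = 2x₄ ∂₁∧∂₃ + 2x₃ ∂₁∧∂₄ − 2x₄ ∂₂∧∂₃ + 2x₃ ∂₂∧∂₄ + (x₁−x₂) ∂₃∧∂₄` on `ℝ⁴`. -/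
def Ppu (x : Fin 4 → ℝ) : Matrix (Fin 4) (Fin 4) ℝ :=
  !![0, 0, 2 * x 3, 2 * x 2;
     0, 0, -2 * x 3, 2 * x 2;
     -2 * x 3, 2 * x 3, 0, x 0 - x 1;
     -2 * x 2, -2 * x 2, -(x 0 - x 1), 0]

/-!
By the product rule, `div (P ∇h)` is the sum of a first-order term, which pairs `∇h` with the vector
of divergences of the columns of `P`, and a second-order term, the trace of `P` times the Hessian of
`h`. The second term vanishes because `P` is skew-symmetric and the Hessian is symmetric. For the
Pais–Uhlenbeck structure the first vanishes too: no entry `P i j` depends on the coordinate `x i`,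
so that every column of `P` is divergence-free.
-/

theorem trace_mul_eq_zero_of_transpose_eq_neg_of_isSymm {n R : Type*} [Fintype n] [CommRing R]
    [IsAddTorsionFree R] {A S : Matrix n n R} (hA : Aᵀ = -A) (hS : S.IsSymm) :
    (A * S).trace = 0 := by
  refine self_eq_neg.mp ?_
  calc (A * S).trace = ((A * S)ᵀ).trace := (trace_transpose _).symm
    _ = (S * -A).trace := by rw [transpose_mul, hS.eq, hA]
    _ = -(A * S).trace := by rw [Matrix.mul_neg, trace_neg, trace_mul_comm]

section

variable {m n : ℕ}

/-- The Jacobian matrix `(∂Vⁱ/∂xⱼ)` of a map `ℝ^m → ℝ^n`. It is built from the partial derivatives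
of the components, as in `divg`, so that the Jacobian of `gradVec h` is the Hessian of `h`. -/
noncomputable def jacobian (V : (Fin m → ℝ) → Fin n → ℝ) (x : Fin m → ℝ) :
    Matrix (Fin n) (Fin m) ℝ :=
  of fun i j => fderiv ℝ (fun y => V y i) x (Pi.single j 1)

/-- The vector `(∑ i, ∂Pⁱʲ/∂xᵢ)ⱼ` of divergences of the columns of a matrix field. For a Poisson
structure `P`, it is the modular vector field with respect to the Euclidean volume form. -/
noncomputable def divgCols (P : (Fin m → ℝ) → Matrix (Fin m) (Fin n) ℝ) (x : Fin m → ℝ) :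
    Fin n → ℝ :=
  fun j => divg (fun y => (P y).col j) x

theorem divg_mulVec {P : (Fin m → ℝ) → Matrix (Fin m) (Fin n) ℝ} {V : (Fin m → ℝ) → Fin n → ℝ}
    {x : Fin m → ℝ} (hP : ∀ i j, DifferentiableAt ℝ (fun y => P y i j) x)
    (hV : DifferentiableAt ℝ V x) :
    divg (fun y => P y *ᵥ V y) x = divgCols P x ⬝ᵥ V x + (P x * jacobian V x).trace := by
  have hVj (j : Fin n) : DifferentiableAt ℝ (fun y => V y j) x := differentiableAt_pi.mp hV j
  have product_rule (i : Fin m) :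
      fderiv ℝ (fun y => (P y *ᵥ V y) i) x (Pi.single i 1) =
        ∑ j, fderiv ℝ (fun y => P y i j) x (Pi.single i 1) * V x j +
          (P x * jacobian V x) i i := by
    simp only [mulVec, dotProduct]
    rw [fderiv_fun_sum fun j _ => (hP i j).fun_mul (hVj j)]
    simp [fderiv_fun_mul (hP i _) (hVj _), mul_apply, jacobian, Finset.sum_add_distrib,
      mul_comm, add_comm]
  calc divg (fun y => P y *ᵥ V y) x
      = ∑ i, ∑ j, fderiv ℝ (fun y => P y i j) x (Pi.single i 1) * V x j +
          (P x * jacobian V x).trace := by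
        simp only [divg, product_rule, Finset.sum_add_distrib, trace, diag_apply]
    _ = divgCols P x ⬝ᵥ V x + (P x * jacobian V x).trace := by
        rw [Finset.sum_comm]
        simp only [dotProduct, divgCols, divg, col_apply, Finset.sum_mul]

theorem differentiableAt_gradVec {h : (Fin m → ℝ) → ℝ} {x : Fin m → ℝ}
    (hh : DifferentiableAt ℝ (fderiv ℝ h) x) : DifferentiableAt ℝ (gradVec h) x :=
  differentiableAt_pi.mpr fun _ => hh.clm_apply (differentiableAt_const _)

theorem jacobian_gradVec_apply {h : (Fin m → ℝ) → ℝ} {x : Fin m → ℝ}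
    (hh : DifferentiableAt ℝ (fderiv ℝ h) x) (i j : Fin m) :
    jacobian (gradVec h) x i j =
      fderiv ℝ (fderiv ℝ h) x (Pi.single j 1) (Pi.single i 1) := by
  simp [jacobian, gradVec, fderiv_clm_apply hh (differentiableAt_const _)]

theorem isSymm_jacobian_gradVec {h : (Fin m → ℝ) → ℝ} {x : Fin m → ℝ}
    (hh : ContDiffAt ℝ 2 h x) : (jacobian (gradVec h) x).IsSymm := by
  have hdiff : DifferentiableAt ℝ (fderiv ℝ h) x :=
    (hh.fderiv_right_succ (n := 1)).differentiableAt_one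
  have hsymm : IsSymmSndFDerivAt ℝ h x := hh.isSymmSndFDerivAt (by simp)
  refine IsSymm.ext fun i j => ?_
  rw [jacobian_gradVec_apply hdiff, jacobian_gradVec_apply hdiff, hsymm.eq]

theorem divg_mulVec_gradVec_of_transpose_eq_neg {P : (Fin m → ℝ) → Matrix (Fin m) (Fin m) ℝ}
    {h : (Fin m → ℝ) → ℝ} {x : Fin m → ℝ} (hP : ∀ i j, DifferentiableAt ℝ (fun y => P y i j) x)
    (hskew : (P x)ᵀ = -P x) (hh : ContDiffAt ℝ 2 h x) :
    divg (fun y => P y *ᵥ gradVec h y) x = divgCols P x ⬝ᵥ gradVec h x := by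
  have hgrad : DifferentiableAt ℝ (gradVec h) x :=
    differentiableAt_gradVec (hh.fderiv_right_succ (n := 1)).differentiableAt_one
  rw [divg_mulVec hP hgrad,
    trace_mul_eq_zero_of_transpose_eq_neg_of_isSymm hskew (isSymm_jacobian_gradVec hh), add_zero]

end

theorem Ppu_transpose (x : Fin 4 → ℝ) : (Ppu x)ᵀ = -Ppu x := by
  ext i j
  fin_cases i <;> fin_cases j <;> simp [Ppu]

theorem differentiable_Ppu_apply (i j : Fin 4) : Differentiable ℝ fun x => Ppu x i j := by
  fin_cases i <;> fin_cases j <;> simp [Ppu, differentiable_apply]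

theorem fderiv_Ppu_apply_single (x : Fin 4 → ℝ) (i j : Fin 4) :
    fderiv ℝ (fun y => Ppu y i j) x (Pi.single i 1) = 0 := by
  have hline (t : ℝ) : Ppu (x + t • Pi.single i 1) i j = Ppu x i j := by
    fin_cases i <;> fin_cases j <;> simp [Ppu]
  rw [← (differentiable_Ppu_apply i j x).lineDeriv_eq_fderiv]
  simp only [lineDeriv, hline, deriv_const]

theorem divgCols_Ppu (x : Fin 4 → ℝ) : divgCols Ppu x = 0 :=
  funext fun j => by simp [divgCols, divg, fderiv_Ppu_apply_single]

theorem stmt_13_general {h : (Fin 4 → ℝ) → ℝ} {x : Fin 4 → ℝ} (hh : ContDiffAt ℝ 2 h x) :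
    divg (fun y => Ppu y *ᵥ gradVec h y) x = 0 := by
  rw [divg_mulVec_gradVec_of_transpose_eq_neg (fun i j => differentiable_Ppu_apply i j x)
    (Ppu_transpose x) hh, divgCols_Ppu, zero_dotProduct]

theorem stmt_13 (h : (Fin 4 → ℝ) → ℝ) (hh : ContDiff ℝ (⊤ : ℕ∞) h) :
    ∀ x : Fin 4 → ℝ, divg (fun y => Ppu y *ᵥ gradVec h y) x = 0 := by
  intro x
  exact stmt_13_general (hh.contDiffAt.of_le (by norm_cast))
end

section
/- Let P(x) be the skew-symmetric 3×3 matrix field of the 𝔰𝔬(3) Lie–Poisson structure on ℝ³, with entries P(x)_{12} = x₃, P(x)_{13} = −x₂, P(x)_{23} = x₁, and let L(x) be the skew-symmetric 3×3 matrix field with entries L(x)_{12} = x₁ − x₂, L(x)_{13} = x₁ − x₃, L(x)_{23} = x₂ − x₃. Then for every x ∈ ℝ³ the matrix I − L(x)·P(x) is invertible and P(x)·(I − L(x)·P(x))⁻¹ = P(x); that is, the 𝔰𝔬(3) Poisson structure is invariant under the gauge transformation induced by the 2-form λ = (x₁−x₂)dx₁∧dx₂ + (x₁−x₃)dx₁∧dx₃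 + (x₂−x₃)dx₂∧dx₃. -/
open Matrix

/-- The coefficient matrix of the `𝔰𝔬(3)` Lie–Poisson bivector field on `ℝ³`. -/
def Pso3 (x : Fin 3 → ℝ) : Matrix (Fin 3) (Fin 3) ℝ :=
  !![0, x 2, -(x 1);
     -(x 2), 0, x 0;
     x 1, -(x 0), 0]

/-- The coefficient matrix of the 2-form
`λ = (x₁−x₂)dx₁∧dx₂ + (x₁−x₃)dx₁∧dx₃ + (x₂−x₃)dx₂∧dx₃`. -/
def Lgauge (x : Fin 3 → ℝ) : Matrix (Fin 3) (Fin 3) ℝ :=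
  !![0, x 0 - x 1, x 0 - x 2;
     -(x 0 - x 1), 0, x 1 - x 2;
     -(x 0 - x 2), -(x 1 - x 2), 0]

/-!
A skew-symmetric `3 × 3` matrix is the matrix of `v ↦ v ⨯₃ a` for its axial vector `a`. If `P` and
`L` have axial vectors `p` and `l`, the vector triple product formula gives `P L P = -(p ⬝ᵥ l) P`.
The axial vector of the `𝔰𝔬(3)` bivector at `x` is `x` itself, and that of `λ` is
`x ⨯₃ (1, 1, 1)`, which is orthogonal to `x`. Hence `P L P = 0`, so `L P` squares to zero and
`P (1 - L P) = P` with `1 - L P` invertible.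
-/

section GaugeTransformation

variable {m n R : Type*} [Fintype m] [Fintype n] [DecidableEq n]

theorem isUnit_one_sub_mul_of_mul_mul_eq_zero [Ring R] {P : Matrix m n R} {L : Matrix n m R}
    (h : P * L * P = 0) : IsUnit (1 - L * P) := by
  have sq_eq_zero : (L * P) ^ 2 = 0 := by
    rw [sq, Matrix.mul_assoc, ← Matrix.mul_assoc P, h, Matrix.mul_zero]
  exact IsNilpotent.isUnit_one_sub ⟨2, sq_eq_zero⟩

theorem mul_one_sub_mul_inv_of_mul_mul_eq_zero [CommRing R] {P : Matrix m n R} {L : Matrix n m R}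
    (h : P * L * P = 0) : P * (1 - L * P)⁻¹ = P := by
  have mul_one_sub : P * (1 - L * P) = P := by
    rw [Matrix.mul_sub, Matrix.mul_one, ← Matrix.mul_assoc, h, sub_zero]
  have isUnit_det : IsUnit (1 - L * P).det :=
    (isUnit_iff_isUnit_det _).mp (isUnit_one_sub_mul_of_mul_mul_eq_zero h)
  calc
    P * (1 - L * P)⁻¹ = P * (1 - L * P) * (1 - L * P)⁻¹ := by rw [mul_one_sub]
    _ = P := mul_nonsing_inv_cancel_right _ _ isUnit_det

end GaugeTransformation

section AxialVector

variable {R : Type*} [CommRing R]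

/-- The skew-symmetric `3 × 3` matrix with axial vector `a`. The sign is chosen so that it acts as
`v ↦ v ⨯₃ a`, which makes `x` the axial vector of `Pso3 x`. -/
def skewMatrix (a : Fin 3 → R) : Matrix (Fin 3) (Fin 3) R :=
  !![0, a 2, -(a 1);
     -(a 2), 0, a 0;
     a 1, -(a 0), 0]

theorem skewMatrix_mulVec (a v : Fin 3 → R) : skewMatrix a *ᵥ v = v ⨯₃ a := by
  ext i
  rw [mulVec, vec3_dotProduct, cross_apply]
  fin_cases i <;> simp [skewMatrix] <;> ring

theorem skewMatrix_mul_skewMatrix_mul_skewMatrix (p l : Fin 3 → R) :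
    skewMatrix p * skewMatrix l * skewMatrix p = -(p ⬝ᵥ l) • skewMatrix p := by
  refine ext_iff_mulVec.mpr fun v => ?_
  calc
    (skewMatrix p * skewMatrix l * skewMatrix p) *ᵥ v = ((v ⨯₃ p) ⨯₃ l) ⨯₃ p := by
      simp only [← mulVec_mulVec, skewMatrix_mulVec]
    _ = ((v ⬝ᵥ l) • p - (p ⬝ᵥ l) • v) ⨯₃ p := by rw [cross_cross_eq_smul_sub_smul v p l]
    _ = -(p ⬝ᵥ l) • (v ⨯₃ p) := by
      simp only [map_sub, map_smul, LinearMap.sub_apply, LinearMap.smul_apply, cross_self,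
        smul_zero, zero_sub, neg_smul]
    _ = (-(p ⬝ᵥ l) • skewMatrix p) *ᵥ v := by rw [smul_mulVec, skewMatrix_mulVec]

end AxialVector

theorem Pso3_eq_skewMatrix (x : Fin 3 → ℝ) : Pso3 x = skewMatrix x := rfl

theorem Lgauge_eq_skewMatrix (x : Fin 3 → ℝ) : Lgauge x = skewMatrix (x ⨯₃ 1) := by
  simp [Lgauge, skewMatrix, cross_apply]

theorem stmt_14_general {R : Type*} [CommRing R] {p l : Fin 3 → R} (h : p ⬝ᵥ l = 0) :
    IsUnit (1 - skewMatrix l * skewMatrix p) ∧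
      skewMatrix p * (1 - skewMatrix l * skewMatrix p)⁻¹ = skewMatrix p := by
  have mul_mul_eq_zero : skewMatrix p * skewMatrix l * skewMatrix p = 0 := by
    rw [skewMatrix_mul_skewMatrix_mul_skewMatrix, h, neg_zero, zero_smul]
  exact ⟨isUnit_one_sub_mul_of_mul_mul_eq_zero mul_mul_eq_zero,
    mul_one_sub_mul_inv_of_mul_mul_eq_zero mul_mul_eq_zero⟩

theorem stmt_14 :
    ∀ x : Fin 3 → ℝ,
      IsUnit (1 - Lgauge x * Pso3 x) ∧
        Pso3 x * (1 - Lgauge x * Pso3 x)⁻¹ = Pso3 x := by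
  intro x
  rw [Pso3_eq_skewMatrix, Lgauge_eq_skewMatrix]
  exact stmt_14_general (dot_self_cross x 1)
end

section
/- Let U ⊆ ℝ³ be open and K : U → ℝ smooth. Define the bracket of smooth functions f, g : U → ℝ by {f,g}(x) = det M(x), where M(x) is the 3×3 matrix whose rows are ∇K(x), ∇f(x), ∇g(x). Then this bracket satisfies the Jacobi identity on U; i.e., the Flaschka–Ratiu bivector field on ℝ³ determined by the prescribed Casimir function K is a Poisson bivector field. -/
open Matrix

/-- The Flaschka–Ratiu bracket on `ℝ³` associated to a prescribed Casimir `K`: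
`{f,g}(x) = det(∇K(x), ∇f(x), ∇g(x))`. -/
noncomputable def frBracket3 (K f g : (Fin 3 → ℝ) → ℝ) (x : Fin 3 → ℝ) : ℝ :=
  (Matrix.of ![gradVec K x, gradVec f x, gradVec g x]).det

/-!
Let `X_f = ∇K × ∇f` be the Hamiltonian vector field of `f`, so that `{f, g} = dg(X_f)`.
Differentiating the triple product `{g, h} = ∇K ⬝ (∇g × ∇h)` along `X_f` turns the Jacobiator into a
sum of Hessian terms. The Hessian of `h` enters only through `D²h(X_f, X_g) - D²h(X_g, X_f) = 0`,
and likewise for `f` and `g`. The Hessian of `K` enters through the cyclic sum of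
`D²K(∇K × ∇f, ∇g × ∇h)`, which by symmetry of `D²K` is alternating in the four vectors
`∇K, ∇f, ∇g, ∇h` of `ℝ³` and therefore vanishes.
-/

theorem dotProduct_apply_single {R n : Type*} [CommSemiring R] [Fintype n] [DecidableEq n]
    (φ : (n → R) →ₗ[R] R) (v : n → R) : (fun i ↦ φ (Pi.single i 1)) ⬝ᵥ v = φ v :=
  LinearMap.congr_fun ((dotProductEquiv R n).apply_symm_apply φ) v

section CrossProduct

variable {R : Type*} [CommRing R] {B : LinearMap.BilinForm R (Fin 3 → R)}

theorem bilinForm_cross_add_cross_eq_zero (hB : B.IsSymm) (k u v : Fin 3 → R) :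
    B (k ⨯₃ u) (k ⨯₃ v) + B (k ⨯₃ v) (u ⨯₃ k) = 0 := by
  rw [← cross_anticomm k u, map_neg, hB.eq, add_neg_cancel]

theorem bilinForm_cross_cross_cyclic (hB : B.IsSymm) (k u v w : Fin 3 → R) :
    B (k ⨯₃ u) (v ⨯₃ w) + B (k ⨯₃ v) (w ⨯₃ u) + B (k ⨯₃ w) (u ⨯₃ v) = 0 := by
  have apply_eq_sum (a b : Fin 3 → R) :
      B a b = ∑ i, ∑ j, a i * b j * B (Pi.single i 1) (Pi.single j 1) := by
    conv_lhs => rw [← Matrix.toBilin'_toMatrix' B, Matrix.toBilin'_apply]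
    simp only [LinearMap.BilinForm.toMatrix'_apply, mul_right_comm]
  rw [apply_eq_sum, apply_eq_sum, apply_eq_sum]
  simp only [cross_apply, Fin.sum_univ_three, cons_val]
  rw [hB.eq (Pi.single 1 1) (Pi.single 0 1), hB.eq (Pi.single 2 1) (Pi.single 0 1),
    hB.eq (Pi.single 2 1) (Pi.single 1 1)]
  ring

theorem fderiv_dotProduct_cross {𝕜 E : Type*} [NontriviallyNormedField 𝕜] [CompleteSpace 𝕜]
    [NormedAddCommGroup E] [NormedSpace 𝕜 E] {u v w : E → Fin 3 → 𝕜} {x : E}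
    (hu : DifferentiableAt 𝕜 u x) (hv : DifferentiableAt 𝕜 v x) (hw : DifferentiableAt 𝕜 w x)
    (d : E) :
    fderiv 𝕜 (fun y ↦ u y ⬝ᵥ v y ⨯₃ w y) x d =
      fderiv 𝕜 u x d ⬝ᵥ v x ⨯₃ w x + fderiv 𝕜 v x d ⬝ᵥ w x ⨯₃ u x +
        fderiv 𝕜 w x d ⬝ᵥ u x ⨯₃ v x := by
  let cross := (crossProduct (R := 𝕜)).toContinuousBilinearMap
  let dot := (dotProductBilin 𝕜 𝕜 (m := Fin 3) (A := 𝕜)).toContinuousBilinearMap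
  have leibniz : fderiv 𝕜 (fun y ↦ u y ⬝ᵥ v y ⨯₃ w y) x d =
      u x ⬝ᵥ (v x ⨯₃ fderiv 𝕜 w x d + fderiv 𝕜 v x d ⨯₃ w x) +
        fderiv 𝕜 u x d ⬝ᵥ v x ⨯₃ w x :=
    DFunLike.congr_fun (dot.hasFDerivAt_of_bilinear hu.hasFDerivAt
      (cross.hasFDerivAt_of_bilinear hv.hasFDerivAt hw.hasFDerivAt)).fderiv d
  rw [leibniz, dotProduct_add, triple_product_permutation (u x) (fderiv 𝕜 v x d),
    ← triple_product_permutation (fderiv 𝕜 w x d)]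
  ring

end CrossProduct

section Hessian

variable {E : Type*} [NormedAddCommGroup E] [NormedSpace ℝ E] {f : E → ℝ} {x : E}

/-- The Hessian `D²f(x)`, as the bilinear form `(v, w) ↦ D(Df)(x)(v)(w)`. It has its intended
meaning only where `fderiv ℝ f` is differentiable. -/
noncomputable def hessian (f : E → ℝ) (x : E) : LinearMap.BilinForm ℝ E :=
  (fderiv ℝ (fderiv ℝ f) x).toBilinForm

theorem isSymm_hessian (hf : ContDiffAt ℝ 2 f x) : (hessian f x).IsSymm :=
  ⟨hf.isSymmSndFDerivAt minSmoothness_of_isRCLikeNormedField.le⟩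

theorem differentiableAt_fderiv_of_contDiffAt_two (hf : ContDiffAt ℝ 2 f x) :
    DifferentiableAt ℝ (fderiv ℝ f) x :=
  (hf.fderiv_right one_add_one_eq_two.le).differentiableAt one_ne_zero

end Hessian

section Gradient

variable {m : ℕ} {f : (Fin m → ℝ) → ℝ} {x : Fin m → ℝ}

theorem gradVec_dotProduct (f : (Fin m → ℝ) → ℝ) (x v : Fin m → ℝ) :
    gradVec f x ⬝ᵥ v = fderiv ℝ f x v :=
  dotProduct_apply_single (fderiv ℝ f x).toLinearMap v

theorem hasFDerivAt_gradVec (hf : DifferentiableAt ℝ (fderiv ℝ f) x) :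
    HasFDerivAt (gradVec f)
      (ContinuousLinearMap.pi fun i ↦ (fderiv ℝ (fderiv ℝ f) x).flip (Pi.single i 1)) x :=
  hasFDerivAt_pi.2 fun i ↦
    ((ContinuousLinearMap.apply ℝ ℝ (Pi.single i 1)).hasFDerivAt.comp x hf.hasFDerivAt :)

theorem fderiv_gradVec_dotProduct (hf : DifferentiableAt ℝ (fderiv ℝ f) x) (v w : Fin m → ℝ) :
    fderiv ℝ (gradVec f) x v ⬝ᵥ w = hessian f x v w := by
  rw [(hasFDerivAt_gradVec hf).fderiv]
  exact dotProduct_apply_single (hessian f x v) w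

end Gradient

section Bracket

variable {K f g h : (Fin 3 → ℝ) → ℝ} {x : Fin 3 → ℝ}

theorem frBracket3_eq_dotProduct_cross (K f g : (Fin 3 → ℝ) → ℝ) (x : Fin 3 → ℝ) :
    frBracket3 K f g x = gradVec K x ⬝ᵥ gradVec f x ⨯₃ gradVec g x :=
  (triple_product_eq_det _ _ _).symm

theorem frBracket3_eq_fderiv_cross (K f g : (Fin 3 → ℝ) → ℝ) (x : Fin 3 → ℝ) :
    frBracket3 K f g x = fderiv ℝ g x (gradVec K x ⨯₃ gradVec f x) := by
  rw [frBracket3_eq_dotProduct_cross, ← triple_product_permutation, gradVec_dotProduct]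

theorem fderiv_frBracket3 (hK : DifferentiableAt ℝ (fderiv ℝ K) x)
    (hf : DifferentiableAt ℝ (fderiv ℝ f) x) (hg : DifferentiableAt ℝ (fderiv ℝ g) x)
    (v : Fin 3 → ℝ) :
    fderiv ℝ (frBracket3 K f g) x v =
      hessian K x v (gradVec f x ⨯₃ gradVec g x) + hessian f x v (gradVec g x ⨯₃ gradVec K x) +
        hessian g x v (gradVec K x ⨯₃ gradVec f x) := by
  have bracket_eq : frBracket3 K f g = fun y ↦ gradVec K y ⬝ᵥ gradVec f y ⨯₃ gradVec g y :=
    funext (frBracket3_eq_dotProduct_cross K f g)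
  rw [bracket_eq, fderiv_dotProduct_cross (hasFDerivAt_gradVec hK).differentiableAt
      (hasFDerivAt_gradVec hf).differentiableAt (hasFDerivAt_gradVec hg).differentiableAt,
    fderiv_gradVec_dotProduct hK, fderiv_gradVec_dotProduct hf, fderiv_gradVec_dotProduct hg]

theorem frBracket3_frBracket3 (f : (Fin 3 → ℝ) → ℝ) (hK : DifferentiableAt ℝ (fderiv ℝ K) x)
    (hg : DifferentiableAt ℝ (fderiv ℝ g) x) (hh : DifferentiableAt ℝ (fderiv ℝ h) x) :
    frBracket3 K f (frBracket3 K g h) x =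
      hessian K x (gradVec K x ⨯₃ gradVec f x) (gradVec g x ⨯₃ gradVec h x) +
        hessian g x (gradVec K x ⨯₃ gradVec f x) (gradVec h x ⨯₃ gradVec K x) +
          hessian h x (gradVec K x ⨯₃ gradVec f x) (gradVec K x ⨯₃ gradVec g x) := by
  rw [frBracket3_eq_fderiv_cross, fderiv_frBracket3 hK hg hh]

theorem stmt_15_general (hK : ContDiffAt ℝ 2 K x) (hf : ContDiffAt ℝ 2 f x)
    (hg : ContDiffAt ℝ 2 g x) (hh : ContDiffAt ℝ 2 h x) :
    frBracket3 K f (frBracket3 K g h) x + frBracket3 K g (frBracket3 K h f) x +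
      frBracket3 K h (frBracket3 K f g) x = 0 := by
  have hK_fderiv := differentiableAt_fderiv_of_contDiffAt_two hK
  have hf_fderiv := differentiableAt_fderiv_of_contDiffAt_two hf
  have hg_fderiv := differentiableAt_fderiv_of_contDiffAt_two hg
  have hh_fderiv := differentiableAt_fderiv_of_contDiffAt_two hh
  rw [frBracket3_frBracket3 f hK_fderiv hg_fderiv hh_fderiv,
    frBracket3_frBracket3 g hK_fderiv hh_fderiv hf_fderiv,
    frBracket3_frBracket3 h hK_fderiv hf_fderiv hg_fderiv]
  linear_combination
    bilinForm_cross_cross_cyclic (isSymm_hessian hK)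
      (gradVec K x) (gradVec f x) (gradVec g x) (gradVec h x) +
    bilinForm_cross_add_cross_eq_zero (isSymm_hessian hf)
      (gradVec K x) (gradVec g x) (gradVec h x) +
    bilinForm_cross_add_cross_eq_zero (isSymm_hessian hg)
      (gradVec K x) (gradVec h x) (gradVec f x) +
    bilinForm_cross_add_cross_eq_zero (isSymm_hessian hh)
      (gradVec K x) (gradVec f x) (gradVec g x)

end Bracket

theorem stmt_15 (U : Set (Fin 3 → ℝ)) (hU : IsOpen U)
    (K : (Fin 3 → ℝ) → ℝ) (hK : ContDiffOn ℝ (⊤ : ℕ∞) K U) :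
    ∀ f g h : (Fin 3 → ℝ) → ℝ,
      ContDiffOn ℝ (⊤ : ℕ∞) f U → ContDiffOn ℝ (⊤ : ℕ∞) g U → ContDiffOn ℝ (⊤ : ℕ∞) h U →
      ∀ x ∈ U,
        frBracket3 K f (frBracket3 K g h) x + frBracket3 K g (frBracket3 K h f) x +
          frBracket3 K h (frBracket3 K f g) x = 0 := by
  intro f g h hf hg hh x hx
  have contDiffAt_two {φ : (Fin 3 → ℝ) → ℝ} (hφ : ContDiffOn ℝ (⊤ : ℕ∞) φ U) :
      ContDiffAt ℝ 2 φ x :=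
    (hφ.contDiffAt (hU.mem_nhds hx)).of_le (WithTop.coe_le_coe.2 le_top)
  exact stmt_15_general (contDiffAt_two hK) (contDiffAt_two hf) (contDiffAt_two hg)
    (contDiffAt_two hh)
end

section
/- Let P(x) be the skew-symmetric 3×3 matrix field on ℝ³ with entries P(x)_{12} = 2(x₂ + x₃), P(x)_{13} = x₁ − x₂, P(x)_{23} = x₁ + x₂ + 2x₃, and for a real parameter a let P_N(y) be the skew-symmetric 3×3 matrix field with entries P_N(y)_{12} = 0, P_N(y)_{13} = y₁ − 4a·y₂, P_N(y)_{23} = 4a·y₁ + y₂. Then there exist a real number a > 0 and an invertible 3×3 real matrix A such that A·P(x)·Aᵀ = P_N(A·x) for every x ∈ ℝ³; that is, the Lie–Poisson bivector field Π = 2(x₂+x₃)∂₁∧∂₂ + (x₁−x₂)∂₁∧∂₃ + (x₁+x₂+2x₃)∂₂∧∂₃ admits the Lie–Poisson bivector field Π_N = (y₁−4a·y₂)∂₁∧∂₃ + (4a·y₁+y₂)∂₂∧∂₃ as a linear normal form. -/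
open Matrix

/-- The coefficient matrix of the Lie–Poisson bivector field
`Π = 2(x₂+x₃)∂₁∧∂₂ + (x₁−x₂)∂₁∧∂₃ + (x₁+x₂+2x₃)∂₂∧∂₃` on `ℝ³`. -/
def Plp (x : Fin 3 → ℝ) : Matrix (Fin 3) (Fin 3) ℝ :=
  !![0, 2 * (x 1 + x 2), x 0 - x 1;
     -(2 * (x 1 + x 2)), 0, x 0 + x 1 + 2 * x 2;
     -(x 0 - x 1), -(x 0 + x 1 + 2 * x 2), 0]

/-- The coefficient matrix of the normal form
`Π_N = (y₁−4a·y₂)∂₁∧∂₃ + (4a·y₁+y₂)∂₂∧∂₃` on `ℝ³`. -/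
def PN (a : ℝ) (y : Fin 3 → ℝ) : Matrix (Fin 3) (Fin 3) ℝ :=
  !![0, 0, y 0 - 4 * a * y 1;
     0, 0, 4 * a * y 0 + y 1;
     -(y 0 - 4 * a * y 1), -(4 * a * y 0 + y 1), 0]

/-!
The bracket at `x` of the linear functions with coefficient vectors `f` and `g` is
`(P x).toBilin' f g`, and `A * P x * Aᵀ` collects the brackets of the rows of `A`. So a
linear normal form amounts to a basis of linear functions with prescribed brackets. With
`u = x₁ - x₂` and `w = x₁ + x₂ + 2x₃` one has `{x₁, x₃} = u`, `{x₂, x₃} = w` and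
`{x₁, x₂} = w - u`. Hence `u` and `w` span the derived algebra; they commute, and
`{u, -x₁} = u - w`, `{w, -x₁} = u + w`, which are the brackets of the normal form with `4a = 1`.
-/

section AlternatingCongruence

variable {R m n : Type*} [CommRing R] [Fintype n] [DecidableEq n]

theorem mul_mul_transpose_apply_eq_toBilin' (A : Matrix m n R) (P : Matrix n n R) (i j : m) :
    (A * P * Aᵀ) i j = P.toBilin' (A i) (A j) := by
  rw [toBilin'_apply', Matrix.mul_assoc]
  rfl

theorem isAlt_toBilin'_mul_mul_transpose [Fintype m] [DecidableEq m] {P : Matrix n n R}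
    (hP : P.toBilin'.IsAlt) (A : Matrix m n R) : (A * P * Aᵀ).toBilin'.IsAlt := by
  have hcomp := toBilin'_comp P Aᵀ Aᵀ
  rw [transpose_transpose] at hcomp
  rw [← hcomp]
  exact fun v ↦ hP (toLin' Aᵀ v)

theorem eq_of_isAlt_toBilin'_of_lt [LinearOrder m] [Fintype m] {M N : Matrix m m R}
    (hM : M.toBilin'.IsAlt) (hN : N.toBilin'.IsAlt) (h : ∀ i j, i < j → M i j = N i j) :
    M = N := by
  ext i j
  rcases lt_trichotomy i j with hij | rfl | hji
  · exact h i j hij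
  · rw [← toBilin'_single M, ← toBilin'_single N, hM.self_eq_zero, hN.self_eq_zero]
  · rw [← toBilin'_single M, ← toBilin'_single N, ← hM.neg_eq, ← hN.neg_eq,
      toBilin'_single, toBilin'_single, h j i hji]

theorem mul_mul_transpose_eq_iff_toBilin'_of_lt [LinearOrder m] [Fintype m]
    {P : Matrix n n R} {Q : Matrix m m R} (hP : P.toBilin'.IsAlt) (hQ : Q.toBilin'.IsAlt)
    (A : Matrix m n R) :
    A * P * Aᵀ = Q ↔ ∀ i j, i < j → P.toBilin' (A i) (A j) = Q i j := by
  simp only [← mul_mul_transpose_apply_eq_toBilin']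
  exact ⟨fun h i j _ ↦ congrFun₂ h i j,
    eq_of_isAlt_toBilin'_of_lt (isAlt_toBilin'_mul_mul_transpose hP A) hQ⟩

end AlternatingCongruence

theorem toBilin'_Plp_apply (x f g : Fin 3 → ℝ) :
    (Plp x).toBilin' f g =
      2 * (x 1 + x 2) * (f 0 * g 1 - f 1 * g 0) + (x 0 - x 1) * (f 0 * g 2 - f 2 * g 0) +
        (x 0 + x 1 + 2 * x 2) * (f 1 * g 2 - f 2 * g 1) := by
  simp only [toBilin'_apply', dotProduct, mulVec, Fin.sum_univ_three, Plp, of_apply, cons_val]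
  ring

theorem isAlt_toBilin'_Plp (x : Fin 3 → ℝ) : (Plp x).toBilin'.IsAlt := by
  intro f
  rw [toBilin'_Plp_apply]
  ring

theorem isAlt_toBilin'_PN (a : ℝ) (y : Fin 3 → ℝ) : (PN a y).toBilin'.IsAlt := by
  intro v
  simp only [toBilin'_apply', dotProduct, mulVec, Fin.sum_univ_three, PN, of_apply, cons_val]
  ring

theorem mul_mul_transpose_eq_PN_iff {n : Type*} [Fintype n] [DecidableEq n] {P : Matrix n n ℝ}
    (hP : P.toBilin'.IsAlt) (A : Matrix (Fin 3) n ℝ) (a : ℝ) (y : Fin 3 → ℝ) :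
    A * P * Aᵀ = PN a y ↔
      P.toBilin' (A 0) (A 1) = 0 ∧ P.toBilin' (A 0) (A 2) = y 0 - 4 * a * y 1 ∧
        P.toBilin' (A 1) (A 2) = 4 * a * y 0 + y 1 := by
  rw [mul_mul_transpose_eq_iff_toBilin'_of_lt hP (isAlt_toBilin'_PN a y)]
  simp [Fin.forall_fin_succ, PN, and_assoc]

/-- The linear change of coordinates `y = (x₁ - x₂, x₁ + x₂ + 2x₃, -x₁)` that brings `Plp` to
normal form; its rows are the coefficient vectors of the new coordinate functions. -/
def normalCoordinates : Matrix (Fin 3) (Fin 3) ℝ :=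
  !![1, -1, 0;
     1, 1, 2;
     -1, 0, 0]

theorem det_normalCoordinates : normalCoordinates.det = 2 := by
  simp [normalCoordinates, det_fin_three]

theorem isUnit_normalCoordinates : IsUnit normalCoordinates := by
  rw [isUnit_iff_isUnit_det, det_normalCoordinates]
  exact isUnit_iff_ne_zero.mpr two_ne_zero

section Brackets

variable (x : Fin 3 → ℝ)

theorem toBilin'_Plp_normalCoordinates_zero_one :
    (Plp x).toBilin' (normalCoordinates 0) (normalCoordinates 1) = 0 := by
  simp only [toBilin'_Plp_apply, normalCoordinates, of_apply, cons_val]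
  ring

theorem toBilin'_Plp_normalCoordinates_zero_two :
    (Plp x).toBilin' (normalCoordinates 0) (normalCoordinates 2) =
      (normalCoordinates *ᵥ x) 0 - (normalCoordinates *ᵥ x) 1 := by
  simp only [toBilin'_Plp_apply, normalCoordinates, mulVec, dotProduct, Fin.sum_univ_three,
    of_apply, cons_val]
  ring

theorem toBilin'_Plp_normalCoordinates_one_two :
    (Plp x).toBilin' (normalCoordinates 1) (normalCoordinates 2) =
      (normalCoordinates *ᵥ x) 0 + (normalCoordinates *ᵥ x) 1 := by
  simp only [toBilin'_Plp_apply, normalCoordinates, mulVec, dotProduct, Fin.sum_univ_three,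
    of_apply, cons_val]
  ring

end Brackets

theorem stmt_17 :
    ∃ a : ℝ, 0 < a ∧ ∃ A : Matrix (Fin 3) (Fin 3) ℝ, IsUnit A ∧
      ∀ x : Fin 3 → ℝ, A * Plp x * Aᵀ = PN a (A *ᵥ x) := by
  refine ⟨1 / 4, by norm_num, normalCoordinates, isUnit_normalCoordinates, fun x ↦ ?_⟩
  rw [mul_mul_transpose_eq_PN_iff (isAlt_toBilin'_Plp x), mul_one_div_cancel four_ne_zero,
    one_mul, one_mul]
  exact ⟨toBilin'_Plp_normalCoordinates_zero_one x, toBilin'_Plp_normalCoordinates_zero_two x,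
    toBilin'_Plp_normalCoordinates_one_two x⟩
end

section
/- Let P(x) be the skew-symmetric 3×3 matrix field on ℝ³ with entries P(x)_{12} = 2(x₂ + x₃), P(x)_{13} = x₁ − x₂, P(x)_{23} = x₁ + x₂ + 2x₃. If K : ℝ³ → ℝ is a smooth function satisfying P(x)·∇K(x) = 0 for all x ∈ ℝ³, then K is constant; that is, the Lie–Poisson bivector field Π = 2(x₂+x₃)∂₁∧∂₂ + (x₁−x₂)∂₁∧∂₃ + (x₁+x₂+2x₃)∂₂∧∂₃ does not admit global, non-constant Casimir functions. -/
open Matrix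

/-!
A Casimir function is constant along the symplectic leaves. In the coordinates
`z = (x₁ + x₃) + i (x₂ + x₃)` and `w = x₃` the bracket is `{z, z̄} = 0`, `{z, w} = (1 + i) z`, so
the two-dimensional leaves are the products of a logarithmic spiral in the `z`-plane with the
`w`-axis, and every point of the line `z = 0` is a leaf. All spirals accumulate at `z = 0`, hence by
continuity `K (z, w) = K (0, w)`, while `K (z, w)` does not depend on `w` when `z ≠ 0`.
-/

open Filter Topology

section ConstantAlongCurves

variable {E F G : Type*} [NormedAddCommGroup E] [NormedAddCommGroup F] [NormedSpace ℝ F]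
  [NormedAddCommGroup G] [NormedSpace ℝ G]

lemma apply_curve_eq_of_fderiv_eq_zero [NormedSpace ℝ E] {f : E → F} (hf : Differentiable ℝ f)
    {γ γ' : ℝ → E} (hγ : ∀ t, HasDerivAt γ (γ' t) t)
    (h : ∀ t, fderiv ℝ f (γ t) (γ' t) = 0) (s t : ℝ) : f (γ s) = f (γ t) := by
  have hderiv (t : ℝ) : HasDerivAt (f ∘ γ) 0 t :=
    h t ▸ (hf (γ t)).hasFDerivAt.comp_hasDerivAt t (hγ t)
  exact is_const_of_deriv_eq_zero (fun t => (hderiv t).differentiableAt)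
    (fun t => (hderiv t).deriv) s t

lemma tendsto_exp_ofReal_mul_atTop_nhds_zero {c : ℂ} (hc : c.re < 0) :
    Tendsto (fun t : ℝ => Complex.exp (t * c)) atTop (𝓝 0) := by
  rw [Complex.tendsto_exp_nhds_zero_iff]
  simpa using tendsto_id.atTop_mul_const_of_neg hc

variable [NormedSpace ℂ E]

lemma hasDerivAt_exp_ofReal_mul_smul (c : ℂ) (z : E) (t : ℝ) :
    HasDerivAt (fun t : ℝ => Complex.exp (t * c) • z) (c • Complex.exp (t * c) • z) t := by
  have hexp : HasDerivAt (fun t : ℝ => Complex.exp (t * c)) (Complex.exp (t * c) * (1 * c)) t :=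
    ((hasDerivAt_id t).ofReal_comp.mul_const c).cexp
  simpa [smul_smul, mul_comm] using hexp.smul_const z

theorem apply_eq_apply_zero_of_fderiv_smul_self_eq_zero {f : E → F} (hf : Differentiable ℝ f)
    {c : ℂ} (hc : c.re ≠ 0) (h : ∀ z, fderiv ℝ f z (c • z) = 0) (z : E) : f z = f 0 := by
  wlog hneg : c.re < 0 generalizing c
  · exact this (c := -c) (by simpa) (fun z => by simp [h z])
      (by simpa using lt_of_le_of_ne (not_lt.mp hneg) hc.symm)
  have hconst (t : ℝ) : f (Complex.exp (t * c) • z) = f z := by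
    simpa using apply_curve_eq_of_fderiv_eq_zero hf (hasDerivAt_exp_ofReal_mul_smul c z)
      (fun t => h _) t 0
  have hcurve : Tendsto (fun t : ℝ => Complex.exp (t * c) • z) atTop (𝓝 0) := by
    simpa using (tendsto_exp_ofReal_mul_atTop_nhds_zero hneg).smul_const z
  have hlim : Tendsto (fun t : ℝ => f (Complex.exp (t * c) • z)) atTop (𝓝 (f 0)) :=
    (hf.continuous.tendsto 0).comp hcurve
  simp only [hconst] at hlim
  exact tendsto_nhds_unique tendsto_const_nhds hlim

theorem apply_eq_of_fderiv_prod_smul_self_eq_zero [Nontrivial E] {f : E × G → F}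
    (hf : Differentiable ℝ f) {c : ℂ} (hc : c.re ≠ 0)
    (hspiral : ∀ z w, fderiv ℝ f (z, w) (c • z, 0) = 0)
    (htrans : ∀ z w v, z ≠ 0 → fderiv ℝ f (z, w) (0, v) = 0) (p q : E × G) : f p = f q := by
  have hfst (z : E) (w : G) : f (z, w) = f (0, w) := by
    refine apply_eq_apply_zero_of_fderiv_smul_self_eq_zero (f := fun z => f (z, w)) (by fun_prop) hc
      (fun z => ?_) z
    have hd : HasFDerivAt (fun z => f (z, w)) _ z :=
      (hf (z, w)).hasFDerivAt.comp z (hasFDerivAt_prodMk_left z w)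
    simpa [hd.fderiv] using hspiral z w
  have hsnd {z : E} (hz : z ≠ 0) (w w' : G) : f (z, w) = f (z, w') := by
    refine is_const_of_fderiv_eq_zero (𝕜 := ℝ) (f := fun w => f (z, w)) (by fun_prop)
      (fun w => ?_) w w'
    have hd : HasFDerivAt (fun w => f (z, w)) _ w :=
      (hf (z, w)).hasFDerivAt.comp w (hasFDerivAt_prodMk_right z w)
    ext v
    simpa [hd.fderiv] using htrans z w v hz
  obtain ⟨z, hz⟩ := exists_ne (0 : E)
  calc f p = f (0, p.2) := hfst p.1 p.2
    _ = f (z, p.2) := (hfst z p.2).symm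
    _ = f (z, q.2) := hsnd hz p.2 q.2
    _ = f (0, q.2) := hfst z q.2
    _ = f q := (hfst q.1 q.2).symm

end ConstantAlongCurves

section Casimir

variable {m : ℕ} {f : (Fin m → ℝ) → ℝ} {x : Fin m → ℝ}

lemma fderiv_apply_eq_dotProduct_gradVec (v : Fin m → ℝ) :
    fderiv ℝ f x v = v ⬝ᵥ gradVec f x := by
  calc fderiv ℝ f x v = fderiv ℝ f x (∑ i, v i • Pi.single i 1) := by rw [← pi_eq_sum_univ' v]
    _ = v ⬝ᵥ gradVec f x := by simp [dotProduct, gradVec]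

lemma fderiv_mulVec_eq_zero_of_mulVec_gradVec_eq_zero {P : Matrix (Fin m) (Fin m) ℝ} (hP : Pᵀ = -P)
    (hf : P *ᵥ gradVec f x = 0) (α : Fin m → ℝ) : fderiv ℝ f x (P *ᵥ α) = 0 := by
  rw [fderiv_apply_eq_dotProduct_gradVec, ← vecMul_transpose, ← dotProduct_mulVec, hP,
    neg_mulVec, hf, neg_zero, dotProduct_zero]

end Casimir

lemma transpose_Plp (x : Fin 3 → ℝ) : (Plp x)ᵀ = -Plp x := by
  ext i j
  fin_cases i <;> fin_cases j <;> simp [Plp]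

/-- The linear coordinates `(z, w) = (x₁ + x₃ + i (x₂ + x₃), x₃)` adapted to `Plp`, written as the
parametrization `(z, w) ↦ x` of `ℝ³`. -/
noncomputable def leafCoord : ℂ × ℝ →L[ℝ] Fin 3 → ℝ :=
  LinearMap.toContinuousLinearMap
    { toFun := fun p => ![p.1.re - p.2, p.1.im - p.2, p.2]
      map_add' := fun p q => by ext i; fin_cases i <;> simp <;> ring
      map_smul' := fun a p => by ext i; fin_cases i <;> simp <;> ring }

lemma leafCoord_apply (z : ℂ) (w : ℝ) : leafCoord (z, w) = ![z.re - w, z.im - w, w] := rfl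

lemma leafCoord_surjective : Function.Surjective leafCoord := fun x => by
  refine ⟨(⟨x 0 + x 2, x 1 + x 2⟩, x 2), ?_⟩
  ext i
  fin_cases i <;> simp [leafCoord_apply]

lemma Plp_leafCoord (z : ℂ) (w : ℝ) :
    Plp (leafCoord (z, w)) =
      !![0, 2 * z.im, z.re - z.im;
         -(2 * z.im), 0, z.re + z.im;
         -(z.re - z.im), -(z.re + z.im), 0] := by
  ext i j
  fin_cases i <;> fin_cases j <;> simp [Plp, leafCoord_apply] <;> ring

lemma leafCoord_one_add_I_smul (z : ℂ) (w : ℝ) :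
    leafCoord ((1 + Complex.I) • z, 0) = Plp (leafCoord (z, w)) *ᵥ ![0, 0, 1] := by
  rw [Plp_leafCoord, leafCoord_apply]
  ext i
  fin_cases i <;> simp [mulVec, dotProduct, Fin.sum_univ_three]
  ring

lemma exists_leafCoord_zero_eq_Plp_mulVec {z : ℂ} (hz : z ≠ 0) (w v : ℝ) :
    ∃ α, leafCoord (0, v) = Plp (leafCoord (z, w)) *ᵥ α := by
  have hnorm : z.re ^ 2 + z.im ^ 2 ≠ 0 := by
    simpa [Complex.normSq_apply, sq] using (Complex.normSq_pos.mpr hz).ne'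
  -- If `C₁, C₂, C₃` are the columns of `Plp`, then `2 z.re • (-1, -1, 1) = -(C₁ + C₂ + 2 C₃)` and
  -- `2 z.im • (-1, -1, 1) = C₁ - C₂`; `α` combines the two with weights `z.re` and `z.im`.
  refine ⟨(v / (2 * (z.re ^ 2 + z.im ^ 2))) • ![z.im - z.re, -(z.re + z.im), -(2 * z.re)], ?_⟩
  rw [Plp_leafCoord, leafCoord_apply]
  ext i
  fin_cases i <;> simp [mulVec, dotProduct, Fin.sum_univ_three] <;> field_simp <;> ring

theorem stmt_18_general (K : (Fin 3 → ℝ) → ℝ) (hK : Differentiable ℝ K)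
    (hCasimir : ∀ x : Fin 3 → ℝ, Plp x *ᵥ gradVec K x = 0) :
    ∀ x y : Fin 3 → ℝ, K x = K y := by
  have hfderiv (p v : ℂ × ℝ) :
      fderiv ℝ (K ∘ leafCoord) p v = fderiv ℝ K (leafCoord p) (leafCoord v) := by
    rw [fderiv_comp p (hK _) leafCoord.differentiableAt, leafCoord.fderiv,
      ContinuousLinearMap.comp_apply]
  have htangent (x α : Fin 3 → ℝ) : fderiv ℝ K x (Plp x *ᵥ α) = 0 :=
    fderiv_mulVec_eq_zero_of_mulVec_gradVec_eq_zero (transpose_Plp x) (hCasimir x) α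
  have hconst (p q : ℂ × ℝ) : K (leafCoord p) = K (leafCoord q) := by
    refine apply_eq_of_fderiv_prod_smul_self_eq_zero (f := K ∘ leafCoord)
      (c := 1 + Complex.I) (hK.comp leafCoord.differentiable) (by simp) (fun z w => ?_)
      (fun z w v hz => ?_) p q
    · rw [hfderiv, leafCoord_one_add_I_smul z w, htangent]
    · obtain ⟨α, hα⟩ := exists_leafCoord_zero_eq_Plp_mulVec hz w v
      rw [hfderiv, hα, htangent]
  exact leafCoord_surjective.forall₂.mpr hconst

theorem stmt_18 (K : (Fin 3 → ℝ) → ℝ) (hK : ContDiff ℝ (⊤ : ℕ∞) K)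
    (hCasimir : ∀ x : Fin 3 → ℝ, Plp x *ᵥ gradVec K x = 0) :
    ∀ x y : Fin 3 → ℝ, K x = K y :=
  stmt_18_general K (hK.differentiable (by simp)) hCasimir
end
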